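/- Let ν ≥ 1 be an integer and (M_k)_{k∈ℕ} a sequence of positive reals satisfying (M.0), (M.2) and (G), with associated function M(r) := sup_{k∈ℕ} log(r^{νk}/M_{νk}). Let d : ℕ → ℕ and let (λ_l)_{l≥1} be positive reals with λ_l ≥ λ₁ > 0 for all l, satisfying d_l ≤ C₁·(1+λ_l)^κ for some constants C₁, κ > 0 and all l ≥ 1. Let v = (v_l) with v_l ∈ ℂ^{d_l} be such that for every block sequence a = (a_l), a_l ∈ ℂ^{d_l}, satisfying ‖a_l‖ ≤ C·exp(−M(L·λ_l^{1/ν})) for some C, L > 0 and all l ≥ 1, one has ∑_{l≥1} ∑_{j=1}^{d_l} |v_l(j)|·|a_l(j)| < ∞. Then for every L > 0 the series ∑_{l≥1} exp(−M(L·λ_l^{1/ν}))·‖v_l‖ converges, where ‖·‖ is the Euclidean (Hilbert–Schmidt) norm on ℂ^{d_l}. -/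

import Mathlib

/-- The associated function `M(r) = sup_{k ∈ ℕ} log ( r^{νk} / M_{νk} )`. -/
noncomputable def assocM (ν : ℕ) (Mk : ℕ → ℝ) (r : ℝ) : ℝ :=
  ⨆ k : ℕ, Real.log (r ^ (ν * k) / Mk (ν * k))

/-!
The block sequence `a l = w l • v l / ‖v l‖` is bounded by the weight `w` and is an equality case
of the Cauchy–Schwarz inequality, so pairing `v` with this single test sequence gives
`∑ w l * ‖v l‖`. The theorem is the case `w l = exp (-M (L * λ_l ^ (1 / ν)))`.
-/

section

variable {J : Type*} [Fintype J] {E : J → Type*} [∀ j, SeminormedAddCommGroup (E j)]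
  [∀ j, NormedSpace ℝ (E j)]

theorem sum_norm_mul_norm_smul_self {c : ℝ} (hc : 0 ≤ c) (x : PiLp 2 E) :
    ∑ j, ‖x j‖ * ‖(c • x) j‖ = c * ‖x‖ ^ 2 := by
  simp_rw [PiLp.smul_apply, norm_smul_of_nonneg hc, PiLp.norm_sq_eq_of_L2, Finset.mul_sum]
  exact Finset.sum_congr rfl fun j _ => by ring

theorem exists_norm_le_sum_norm_mul_norm_eq {r : ℝ} (hr : 0 ≤ r) (x : PiLp 2 E) :
    ∃ y : PiLp 2 E, ‖y‖ ≤ r ∧ ∑ j, ‖x j‖ * ‖y j‖ = r * ‖x‖ := by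
  have hc : 0 ≤ r / ‖x‖ := by positivity
  -- If `‖x‖ = 0`, the witness is `0` because `r / 0 = 0`.
  refine ⟨(r / ‖x‖) • x, ?_, ?_⟩
  · calc
      ‖(r / ‖x‖) • x‖ = r * (‖x‖ / ‖x‖) := by
        rw [norm_smul_of_nonneg hc, div_mul_eq_mul_div, mul_div_assoc]
      _ ≤ r := mul_le_of_le_one_right hr (div_self_le_one _)
  · calc
      ∑ j, ‖x j‖ * ‖((r / ‖x‖) • x) j‖ = r / ‖x‖ * ‖x‖ ^ 2 := sum_norm_mul_norm_smul_self hc x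
      _ = r * (‖x‖ * ‖x‖ / ‖x‖) := by ring
      _ = r * ‖x‖ := by rw [mul_self_div_self]

end

theorem stmt_14_general {ι : Type*} {J : ι → Type*} [∀ i, Fintype (J i)]
    {E : (i : ι) → J i → Type*} [∀ i j, SeminormedAddCommGroup (E i j)]
    [∀ i j, NormedSpace ℝ (E i j)] {w : ι → ℝ} (hw : ∀ i, 0 ≤ w i) (v : (i : ι) → PiLp 2 (E i))
    (hv : ∀ a : (i : ι) → PiLp 2 (E i), (∀ i, ‖a i‖ ≤ w i) →
      Summable fun i => ∑ j, ‖v i j‖ * ‖a i j‖) :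
    Summable fun i => w i * ‖v i‖ := by
  choose a ha_le ha_sum using fun i => exists_norm_le_sum_norm_mul_norm_eq (hw i) (v i)
  exact (hv a ha_le).congr fun i => ha_sum i

theorem stmt_14 (ν : ℕ) (hν : 1 ≤ ν) (Mk : ℕ → ℝ) (hMpos : ∀ k, 0 < Mk k)
    (hM0 : Mk 0 = 1)
    (A H : ℝ) (hA : 1 ≤ A) (hH : 1 ≤ H)
    (hM2 : ∀ k : ℕ, Mk (2 * k) ≤ A * H ^ (2 * k) * Mk k ^ 2)
    (hG : ∃ C₀ > (0 : ℝ), ∃ l > (0 : ℝ), ∀ k : ℕ, (k.factorial : ℝ) ≤ C₀ * l ^ k * Mk k)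
    (d : ℕ → ℕ) (lam : ℕ → ℝ) (hlam : ∀ l, 0 < lam l) (hlb : ∀ l, lam 0 ≤ lam l)
    (C₁ κ : ℝ) (hC₁ : 0 < C₁) (hκ : 0 < κ)
    (hd : ∀ l, (d l : ℝ) ≤ C₁ * (1 + lam l) ^ κ)
    (v : (l : ℕ) → EuclideanSpace ℂ (Fin (d l)))
    (hv : ∀ a : (l : ℕ) → EuclideanSpace ℂ (Fin (d l)),
      (∃ C > (0 : ℝ), ∃ L > (0 : ℝ), ∀ l,
        ‖a l‖ ≤ C * Real.exp (-(assocM ν Mk (L * lam l ^ (1 / (ν : ℝ)))))) →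
      Summable (fun l => ∑ j : Fin (d l), ‖v l j‖ * ‖a l j‖)) :
    ∀ L : ℝ, 0 < L →
      Summable (fun l => Real.exp (-(assocM ν Mk (L * lam l ^ (1 / (ν : ℝ))))) * ‖v l‖) := by
  intro L hL
  exact stmt_14_general (fun _ => (Real.exp_pos _).le) v fun a ha =>
    hv a ⟨1, one_pos, L, hL, fun l => (ha l).trans_eq (one_mul _).symm⟩
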